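/- Let I ⊆ {1,…,n} have contiguous blocks B_1,…,B_k. For every w ∈ S_{n+1} and every choice of reflections (transpositions) r_1,…,r_k with r_j ∈ W_{B_j}, the element g_w · (1 + g_{r_1}) ⋯ (1 + g_{r_k}) · ∏_{i∈I} e_i of ℰ_n(v) lies in the subalgebra 𝒞_n(v) generated by g_1,…,g_n. -/

import Mathlib

noncomputable section

/-- The field `K = ℂ(v)` of rational functions over `ℂ`. -/
abbrev Kv : Type := RatFunc ℂ

/-- The variable `v ∈ ℂ(v)`. -/
noncomputable def vv : Kv := RatFunc.X

/-- The generator `g_i` of the free algebra (`.inl i ↦ g_i`). -/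
noncomputable def bgF (n : ℕ) (i : Fin n) : FreeAlgebra Kv (Fin n ⊕ Fin n) :=
  FreeAlgebra.ι Kv (Sum.inl i)

/-- The generator `e_i` of the free algebra (`.inr i ↦ e_i`). -/
noncomputable def beF (n : ℕ) (i : Fin n) : FreeAlgebra Kv (Fin n ⊕ Fin n) :=
  FreeAlgebra.ι Kv (Sum.inr i)

/-- Defining relations of the (type `A_n`) generalized algebra of braids and ties
`ℰ_n(v)`, for generators `g_1, …, g_n, e_1, …, e_n` (indexed here by `Fin n`,
with `|i − j|` rendered as `Nat.dist i j`). -/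
inductive BTRel (n : ℕ) :
    FreeAlgebra Kv (Fin n ⊕ Fin n) → FreeAlgebra Kv (Fin n ⊕ Fin n) → Prop
  | gg_comm (i j : Fin n) (h : 2 ≤ Nat.dist i j) :
      BTRel n (bgF n i * bgF n j) (bgF n j * bgF n i)
  | eg_comm (i j : Fin n) (h : 2 ≤ Nat.dist i j) :
      BTRel n (beF n i * bgF n j) (bgF n j * beF n i)
  | braid (i j : Fin n) (h : Nat.dist i j = 1) :
      BTRel n (bgF n i * bgF n j * bgF n i) (bgF n j * bgF n i * bgF n j)
  | egg (i j : Fin n) (h : Nat.dist i j = 1) :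
      BTRel n (beF n i * bgF n j * bgF n i) (bgF n j * bgF n i * beF n j)
  | ee_comm (i j : Fin n) :
      BTRel n (beF n i * beF n j) (beF n j * beF n i)
  | e_idem (i : Fin n) :
      BTRel n (beF n i * beF n i) (beF n i)
  | eg_same (i : Fin n) :
      BTRel n (beF n i * bgF n i) (bgF n i * beF n i)
  | eeg₁ (i j : Fin n) (h : Nat.dist i j = 1) :
      BTRel n (beF n i * beF n j * bgF n j) (beF n i * bgF n j * beF n i)
  | eeg₂ (i j : Fin n) (h : Nat.dist i j = 1) :
      BTRel n (beF n i * bgF n j * beF n i) (bgF n j * beF n i * beF n j)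
  | quad (i : Fin n) :
      BTRel n (bgF n i * bgF n i)
        (1 + (vv ^ 2 - 1) • (beF n i * (1 + bgF n i)))

/-- The generalized algebra of braids and ties `ℰ_n(v)` in type `A_n`. -/
abbrev BT (n : ℕ) := RingQuot (BTRel n)

/-- The generator `g_i` of `ℰ_n(v)`. -/
noncomputable def bg (n : ℕ) (i : Fin n) : BT n :=
  RingQuot.mkAlgHom Kv (BTRel n) (bgF n i)

/-- The generator `e_i` of `ℰ_n(v)`. -/
noncomputable def be (n : ℕ) (i : Fin n) : BT n :=
  RingQuot.mkAlgHom Kv (BTRel n) (beF n i)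

/-- The subalgebra `𝒞_n(v) ⊆ ℰ_n(v)` generated by `g_1, …, g_n`. -/
noncomputable def BTC (n : ℕ) : Subalgebra Kv (BT n) :=
  Algebra.adjoin Kv (Set.range (bg n))

open scoped Classical

/-- `B` is a contiguous block of `I ⊆ {1, …, n}` (subsets of `{1, …, n}` are modelled
as `Finset (Fin n)`): a maximal subset of `I` consisting of consecutive integers. -/
def IsBlock {n : ℕ} (I B : Finset (Fin n)) : Prop :=
  ∃ a b : Fin n, a ≤ b ∧ B = Finset.Icc a b ∧ B ⊆ I ∧
    (∀ c : Fin n, (c : ℕ) + 1 = (a : ℕ) → c ∉ I) ∧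
    (∀ c : Fin n, (b : ℕ) + 1 = (c : ℕ) → c ∉ I)

/-- The set of contiguous blocks of `I`. -/
noncomputable def blocksOf {n : ℕ} (I : Finset (Fin n)) : Finset (Finset (Fin n)) :=
  I.powerset.filter (fun B => IsBlock I B)

/-- `n_i(I)`: the number of contiguous blocks of `I` of size `i`. -/
noncomputable def nBlocks {n : ℕ} (I : Finset (Fin n)) (i : ℕ) : ℕ :=
  ((blocksOf I).filter (fun B => B.card = i)).card

/-- `N_I = (n+1 − Σ_i (i+1)·n_i(I))! · ∏_i ( n_i(I)! · ((i+1)!)^{n_i(I)} )`. -/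
noncomputable def NIval {n : ℕ} (I : Finset (Fin n)) : ℕ :=
  Nat.factorial (n + 1 - ∑ i ∈ Finset.range (n + 1), (i + 1) * nBlocks I i) *
    ∏ i ∈ Finset.range (n + 1),
      Nat.factorial (nBlocks I i) * Nat.factorial (i + 1) ^ nBlocks I i

/-- `j` is a descent of the permutation `w` of `{1, …, n+1}` (positions are indexed
by `Fin (n+1)`, the simple reflections `s_1, …, s_n` by `Fin n`):  `w(j) > w(j+1)`. -/
def IsDescent {n : ℕ} (w : Equiv.Perm (Fin (n + 1))) (j : Fin n) : Prop :=
  w j.succ < w j.castSucc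

/-- `D_I`: the number of permutations `w` of `{1, …, n+1}` such that every
contiguous block of `I` contains a descent of `w`. -/
noncomputable def DIval {n : ℕ} (I : Finset (Fin n)) : ℕ :=
  (Finset.univ.filter (fun w : Equiv.Perm (Fin (n + 1)) =>
    ∀ B ∈ blocksOf I, ∃ j ∈ B, IsDescent w j)).card

/-- The adjacent transposition `s_j = (j, j+1)` as a permutation of `Fin (n+1)`. -/
def sTrans {n : ℕ} (j : Fin n) : Equiv.Perm (Fin (n + 1)) :=
  Equiv.swap j.castSucc j.succ

/-- `l` is a reduced expression for `w`: the corresponding product of adjacent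
transpositions is `w`, and `l` has minimal length among all such words. -/
def IsReducedWord {n : ℕ} (w : Equiv.Perm (Fin (n + 1))) (l : List (Fin n)) : Prop :=
  (l.map sTrans).prod = w ∧
    ∀ l' : List (Fin n), (l'.map sTrans).prod = w → l.length ≤ l'.length

section Helpers

variable {n : ℕ}

lemma bt_gg_comm' (i j : Fin n) (h : 2 ≤ Nat.dist i j) : bg n i * bg n j = bg n j * bg n i := by
  simpa [bg, be] using RingQuot.mkAlgHom_rel Kv (BTRel.gg_comm i j h)

lemma bt_eg_comm (i j : Fin n) (h : 2 ≤ Nat.dist i j) : be n i * bg n j = bg n j * be n i := by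
  simpa [bg, be] using RingQuot.mkAlgHom_rel Kv (BTRel.eg_comm i j h)

lemma bt_ee_comm (i j : Fin n) : be n i * be n j = be n j * be n i := by
  simpa [bg, be] using RingQuot.mkAlgHom_rel Kv (BTRel.ee_comm i j)

lemma bt_idem (i : Fin n) : be n i * be n i = be n i := by
  simpa [bg, be] using RingQuot.mkAlgHom_rel Kv (BTRel.e_idem i)

lemma bt_eg_same (i : Fin n) : be n i * bg n i = bg n i * be n i := by
  simpa [bg, be] using RingQuot.mkAlgHom_rel Kv (BTRel.eg_same i)

lemma bt_eeg1 (i j : Fin n) (h : Nat.dist i j = 1) :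
    be n i * be n j * bg n j = be n i * bg n j * be n i := by
  simpa [bg, be] using RingQuot.mkAlgHom_rel Kv (BTRel.eeg₁ i j h)

lemma bt_eeg2 (i j : Fin n) (h : Nat.dist i j = 1) :
    be n i * bg n j * be n i = bg n j * be n i * be n j := by
  simpa [bg, be] using RingQuot.mkAlgHom_rel Kv (BTRel.eeg₂ i j h)

lemma bt_quad (i : Fin n) :
    bg n i * bg n i = 1 + (vv ^ 2 - 1) • (be n i * (1 + bg n i)) := by
  have h := RingQuot.mkAlgHom_rel Kv (BTRel.quad i)
  simpa only [bg, be, map_mul, map_add, map_one, map_smul] using h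

lemma gen_mod {K M : Type*} [Field K] [AddCommGroup M] [Module K M] (c : K) (x y : M) :
    x + y + y + (x + (c - 1) • (x + y)) = (c + 1) • (x + y) := by
  module

lemma gen_ring1 {R : Type*} [Ring R] (a e g : R) (h : a * (g * e) * a = a * g * a) :
    a * ((1 + g) * e - g) * a = a * e * a := by
  have : a * ((1 + g) * e - g) * a = a * e * a + a * (g * e) * a - a * g * a := by
    simp only [mul_sub, sub_mul, add_mul, mul_add, one_mul]
  rw [this, h]
  abel

lemma gen_ring2 {K R : Type*} [Field K] [Ring R] [Algebra K R] (p g E : R) (c : K) :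
    p * g * E - (c * (-1)) • E = p * ((1 + g) * E) - (p * E - c • E) := by
  simp only [add_mul, mul_add, one_mul, mul_assoc]
  module

lemma gen_ring3 {K R : Type*} [Field K] [Ring R] [Algebra K R] (p E : R) :
    (1 + p) * E = p * E - (-1 : K) • E := by
  rw [add_mul, one_mul]
  module

lemma vv_eq : vv = algebraMap (Polynomial ℂ) Kv Polynomial.X := by
  simp [vv]

lemma vv_sub_ne : (vv ^ 2 - 1 : Kv) ≠ 0 := by
  have h : (Polynomial.X ^ 2 - 1 : Polynomial ℂ) ≠ 0 := by
    intro h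
    have := congrArg (Polynomial.eval 0) h
    simp at this
  intro h'
  apply h
  apply RatFunc.algebraMap_injective ℂ
  rw [map_zero, map_sub, map_pow, map_one, ← vv_eq]
  exact h'

lemma vv_add_ne : (vv ^ 2 + 1 : Kv) ≠ 0 := by
  have h : (Polynomial.X ^ 2 + 1 : Polynomial ℂ) ≠ 0 := by
    intro h
    have := congrArg (Polynomial.eval 0) h
    simp at this
  intro h'
  apply h
  apply RatFunc.algebraMap_injective ℂ
  rw [map_zero, map_add, map_pow, map_one, ← vv_eq]
  exact h'

/-- product of the `e_i` over a finset -/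
def EE (S : Finset (Fin n)) : BT n :=
  S.noncommProd (be n) (fun i _ j _ _ => bt_ee_comm i j)

lemma EE_empty : EE (∅ : Finset (Fin n)) = 1 :=
  Finset.noncommProd_empty _ _

lemma EE_sort (S : Finset (Fin n)) : ((S.sort (· ≤ ·)).map (be n)).prod = EE S := by
  have h := Finset.noncommProd_toFinset (S.sort (· ≤ ·)) (be n)
    (fun i _ j _ _ => bt_ee_comm i j) (Finset.sort_nodup _ _)
  rw [← h]
  unfold EE
  congr 1
  simp

lemma EE_insert (i : Fin n) (S : Finset (Fin n)) : EE (insert i S) = be n i * EE S := by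
  have key : ∀ T : Finset (Fin n), i ∉ T → EE (insert i T) = be n i * EE T := by
    intro T hT
    exact Finset.noncommProd_insert_of_notMem _ _ _ _ hT
  by_cases h : i ∈ S
  · have h1 := key (S.erase i) (Finset.notMem_erase i S)
    rw [Finset.insert_erase h] at h1
    rw [Finset.insert_eq_of_mem h, h1, ← mul_assoc, bt_idem]
  · exact key S h

lemma EE_mul (S T : Finset (Fin n)) : EE (S ∪ T) = EE S * EE T := by
  induction S using Finset.induction_on with
  | empty => simp [EE_empty]
  | insert i S _ ih => rw [Finset.insert_union, EE_insert, EE_insert, ih, mul_assoc]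

lemma EE_comm (S T : Finset (Fin n)) : EE S * EE T = EE T * EE S := by
  rw [← EE_mul, ← EE_mul, Finset.union_comm]

lemma EE_single (i : Fin n) : EE {i} = be n i := by
  have := EE_insert i ∅
  simpa [EE_empty] using this

lemma EE_absorb {i : Fin n} {S : Finset (Fin n)} (h : i ∈ S) : be n i * EE S = EE S := by
  rw [← EE_insert, Finset.insert_eq_of_mem h]

lemma EE_absorb' {i : Fin n} {S : Finset (Fin n)} (h : i ∈ S) : EE S * be n i = EE S := by
  rw [← EE_single, EE_comm, EE_single, EE_absorb h]

lemma comm_far (i : Fin n) (S : Finset (Fin n)) (h : ∀ j ∈ S, 2 ≤ Nat.dist j i) :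
    Commute (bg n i) (EE S) := by
  induction S using Finset.induction_on with
  | empty => rw [EE_empty]; exact Commute.one_right _
  | insert j S _ ih =>
    rw [EE_insert]
    apply Commute.mul_right
    · exact (bt_eg_comm j i (h j (Finset.mem_insert_self _ _))).symm
    · exact ih (fun k hk => h k (Finset.mem_insert_of_mem hk))

lemma comm_pair (m i : Fin n) : Commute (bg n m) (be n m * be n i) := by
  have hm : Commute (bg n m) (be n m) := (bt_eg_same m).symm
  rcases Nat.lt_trichotomy (Nat.dist i m) 1 with h | h | h
  · have : i = m := Fin.ext (Nat.eq_of_dist_eq_zero (by omega))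
    subst this
    exact hm.mul_right hm
  · have h1 := (bt_eeg1 i m h).trans (bt_eeg2 i m h)
    unfold Commute SemiconjBy
    rw [bt_ee_comm m i, h1, mul_assoc]
  · exact hm.mul_right (bt_eg_comm i m h).symm

lemma comm_mem {m : Fin n} {S : Finset (Fin n)} (h : m ∈ S) : Commute (bg n m) (EE S) := by
  have key : ∀ T : Finset (Fin n), Commute (bg n m) (be n m * EE T) := by
    intro T
    induction T using Finset.induction_on with
    | empty => rw [EE_empty, mul_one]; exact (bt_eg_same m).symm
    | insert i T _ ih =>
      have : be n m * EE (insert i T) = (be n m * be n i) * (be n m * EE T) := by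
        rw [EE_insert, mul_assoc, ← mul_assoc (be n i) (be n m), bt_ee_comm i m, ← mul_assoc,
          ← mul_assoc, ← mul_assoc, bt_idem, mul_assoc]
      rw [this]
      exact (comm_pair m i).mul_right ih
  have := key S
  rwa [EE_absorb h] at this

lemma bg_mem (i : Fin n) : bg n i ∈ BTC n := Algebra.subset_adjoin ⟨i, rfl⟩

lemma base_mem (i : Fin n) : (1 + bg n i) * be n i ∈ BTC n := by
  have h : (1 + bg n i) * be n i = (vv ^ 2 - 1 : Kv)⁻¹ • (bg n i * bg n i - 1) := by
    rw [bt_quad, add_sub_cancel_left, smul_smul, inv_mul_cancel₀ vv_sub_ne, one_smul, add_mul,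
      mul_add, one_mul, mul_one, bt_eg_same]
  rw [h]
  exact (BTC n).smul_mem ((BTC n).sub_mem ((BTC n).mul_mem (bg_mem i) (bg_mem i))
    (BTC n).one_mem) _

lemma sq_EE {m : Fin n} {S : Finset (Fin n)} (h : m ∈ S) :
    (1 + bg n m) * ((1 + bg n m) * EE S) = (vv ^ 2 + 1 : Kv) • ((1 + bg n m) * EE S) := by
  have h1 : bg n m * (bg n m * EE S) = EE S + (vv ^ 2 - 1 : Kv) • (EE S + bg n m * EE S) := by
    rw [← mul_assoc, bt_quad, add_mul, one_mul, smul_mul_assoc, mul_add, mul_one, bt_eg_same,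
      add_mul, mul_assoc, EE_absorb h]
  have h2 : (1 + bg n m) * ((1 + bg n m) * EE S)
      = EE S + bg n m * EE S + bg n m * EE S + bg n m * (bg n m * EE S) := by
    noncomm_ring
  rw [h2, h1, add_mul, one_mul]
  exact gen_mod _ _ _

lemma step_mem {m i j : Fin n} {A : Finset (Fin n)} (hm : m ∈ A) (hi : i ∈ A)
    (hij : Nat.dist i j = 1) (hA : (1 + bg n m) * EE A ∈ BTC n) :
    (1 + bg n m) * EE (insert j A) ∈ BTC n := by
  have hm' : m ∈ insert j A := Finset.mem_insert_of_mem hm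
  have hc : (1 + bg n m) * EE A = EE A * (1 + bg n m) := by
    rw [add_mul, mul_add, one_mul, mul_one, (comm_mem hm).eq]
  have hc' : (1 + bg n m) * EE (insert j A) = EE (insert j A) * (1 + bg n m) := by
    rw [add_mul, mul_add, one_mul, mul_one, (comm_mem hm').eq]
  have hx : (1 + bg n m) * EE A * ((1 + bg n j) * be n j - bg n j) * ((1 + bg n m) * EE A)
      ∈ BTC n :=
    (BTC n).mul_mem ((BTC n).mul_mem hA ((BTC n).sub_mem (base_mem j) (bg_mem j))) hA
  have h3 : be n i * ((1 + bg n j) * be n j - bg n j) * be n i = be n i * be n j := by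
    have e1 : be n i * (bg n j * be n j) * be n i = be n i * bg n j * be n i := by
      rw [← bt_eg_same, ← mul_assoc, bt_eeg1 i j hij, mul_assoc, bt_idem]
    have e2 : be n i * be n j * be n i = be n i * be n j := by
      rw [mul_assoc, bt_ee_comm j i, ← mul_assoc, bt_idem]
    exact (gen_ring1 _ _ _ e1).trans e2
  have h4 : EE A * ((1 + bg n j) * be n j - bg n j) * EE A = EE (insert j A) := by
    have hAA : EE A * EE A = EE A := by rw [← EE_mul, Finset.union_self]
    calc EE A * ((1 + bg n j) * be n j - bg n j) * EE A
        = (EE A * be n i) * ((1 + bg n j) * be n j - bg n j) * (be n i * EE A) := by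
          rw [EE_absorb hi, EE_absorb' hi]
      _ = EE A * (be n i * ((1 + bg n j) * be n j - bg n j) * be n i) * EE A := by
          simp only [mul_assoc]
      _ = EE A * be n j * EE A := by rw [h3, ← mul_assoc, EE_absorb' hi]
      _ = EE (insert j A) := by
          rw [← EE_single j, EE_comm A {j}, mul_assoc, hAA, EE_single, ← EE_insert]
  have h5 : (1 + bg n m) * EE A * ((1 + bg n j) * be n j - bg n j) * ((1 + bg n m) * EE A)
      = (vv ^ 2 + 1 : Kv) • ((1 + bg n m) * EE (insert j A)) := by
    have hl : (1 + bg n m) * EE A * ((1 + bg n j) * be n j - bg n j) * (EE A * (1 + bg n m))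
      = (1 + bg n m) * ((EE A * ((1 + bg n j) * be n j - bg n j) * EE A) * (1 + bg n m)) := by
      simp only [mul_assoc]
    rw [← sq_EE hm']
    conv_lhs => rw [hc, ← hc]
    rw [hc', ← h4, ← hl, ← hc]
  rw [h5] at hx
  have := (BTC n).smul_mem hx (vv ^ 2 + 1 : Kv)⁻¹
  rwa [smul_smul, inv_mul_cancel₀ vv_add_ne, one_smul] at this

lemma block_mem {a b m : Fin n} (hm : m ∈ Finset.Icc a b) :
    (1 + bg n m) * EE (Finset.Icc a b) ∈ BTC n := by
  rw [Finset.mem_Icc] at hm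
  obtain ⟨ham, hmb⟩ := hm
  have right : ∀ t : ℕ, ∀ h : (m : ℕ) + t < n,
      (1 + bg n m) * EE (Finset.Icc m ⟨m + t, h⟩) ∈ BTC n := by
    intro t
    induction t with
    | zero =>
      intro h
      have : Finset.Icc m ⟨(m : ℕ) + 0, h⟩ = {m} := by
        simp
      rw [this, EE_single]
      exact base_mem m
    | succ t ih =>
      intro h
      have h' : (m : ℕ) + t < n := by omega
      have e : Finset.Icc m ⟨(m : ℕ) + (t + 1), h⟩
          = insert ⟨(m : ℕ) + (t + 1), h⟩ (Finset.Icc m ⟨(m : ℕ) + t, h'⟩) := by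
        ext x; simp only [Finset.mem_insert, Finset.mem_Icc, Fin.le_def, Fin.ext_iff]; omega
      rw [e]
      refine step_mem (i := ⟨(m : ℕ) + t, h'⟩) ?_ ?_ ?_ (ih h')
      · simp [Finset.mem_Icc, Fin.le_def]
      · simp [Finset.mem_Icc, Fin.le_def]
      · simp [Nat.dist]; omega
  have left : ∀ t : ℕ, ∀ h : t ≤ (m : ℕ),
      (1 + bg n m) * EE (Finset.Icc ⟨(m : ℕ) - t, by omega⟩ b) ∈ BTC n := by
    intro t
    induction t with
    | zero =>
      intro h
      have := right ((b : ℕ) - m) (by have := b.2; rw [Fin.le_def] at hmb; omega)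
      have e : (⟨(m : ℕ) + ((b : ℕ) - m), by
        have := b.2; rw [Fin.le_def] at hmb; omega⟩ : Fin n) = b := by
        rw [Fin.le_def] at hmb
        ext; simp; omega
      rw [e] at this
      exact this
    | succ t ih =>
      intro h
      have h' : t ≤ (m : ℕ) := by omega
      rw [Fin.le_def] at hmb
      have e : Finset.Icc ⟨(m : ℕ) - (t + 1), by omega⟩ b
          = insert ⟨(m : ℕ) - (t + 1), by omega⟩ (Finset.Icc ⟨(m : ℕ) - t, by omega⟩ b) := by
        ext x; simp only [Finset.mem_insert, Finset.mem_Icc, Fin.le_def, Fin.ext_iff]; omega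
      rw [e]
      refine step_mem (i := ⟨(m : ℕ) - t, by omega⟩) ?_ ?_ ?_ (ih h')
      · simp only [Finset.mem_Icc, Fin.le_def]; omega
      · simp only [Finset.mem_Icc, Fin.le_def]; omega
      · simp [Nat.dist]; omega
  have := left ((m : ℕ) - a) (by omega)
  have e : (⟨(m : ℕ) - ((m : ℕ) - a), by omega⟩ : Fin n) = a := by
    rw [Fin.le_def] at ham
    ext; simp; omega
  rw [e] at this
  exact this

lemma word_mem {a b : Fin n} (l : List (Fin n)) (hl : ∀ i ∈ l, i ∈ Finset.Icc a b) :
    (l.map (bg n)).prod * EE (Finset.Icc a b) - ((-1 : Kv) ^ l.length) • EE (Finset.Icc a b)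
      ∈ BTC n := by
  induction l using List.reverseRecOn with
  | nil =>
    simp only [List.map_nil, List.prod_nil, one_mul, List.length_nil, pow_zero, one_smul]
    convert (BTC n).zero_mem using 1
    exact sub_self _
  | append_singleton l i ih =>
    have h1 := ih (fun x hx => hl x (by simp [hx]))
    have h2 := block_mem (hl i (by simp))
    have hw : (l.map (bg n)).prod ∈ BTC n := by
      apply Subalgebra.list_prod_mem
      intro x hx
      obtain ⟨j, _, rfl⟩ := List.mem_map.1 hx
      exact bg_mem j
    have h3 := (BTC n).sub_mem ((BTC n).mul_mem hw h2) h1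
    convert h3 using 1
    simp only [List.map_append, List.prod_append, List.map_cons, List.map_nil, List.prod_cons,
      List.prod_nil, List.length_append, List.length_cons, List.length_nil, pow_succ, zero_add,
      mul_one]
    exact gen_ring2 _ _ _ _

lemma word_odd_mem {a b : Fin n} (l : List (Fin n)) (hl : ∀ i ∈ l, i ∈ Finset.Icc a b)
    (ho : Odd l.length) :
    (1 + (l.map (bg n)).prod) * EE (Finset.Icc a b) ∈ BTC n := by
  have := word_mem l hl
  rw [ho.neg_one_pow] at this
  rw [gen_ring3 (K := Kv)]
  exact this

lemma sign_word (l : List (Fin n)) :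
    Equiv.Perm.sign (l.map sTrans).prod = (-1) ^ l.length := by
  induction l with
  | nil => simp
  | cons i l ih =>
    have : Equiv.Perm.sign (sTrans i) = -1 :=
      Equiv.Perm.sign_swap (by simp [Fin.ext_iff])
    simp [ih, pow_succ, this]

lemma odd_of_swap {l : List (Fin n)} {r : Equiv.Perm (Fin (n + 1))}
    (h : (l.map sTrans).prod = r) (hr : r.IsSwap) : Odd l.length := by
  by_contra hc
  rw [Nat.not_odd_iff_even] at hc
  have h1 := sign_word l
  obtain ⟨x, y, hxy, rfl⟩ := hr
  rw [h, hc.neg_one_pow, Equiv.Perm.sign_swap hxy] at h1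
  exact absurd h1 (by decide)

/-- the set `{0,…,m}` is preserved -/
def Pres (m : Fin n) (p : Equiv.Perm (Fin (n + 1))) : Prop :=
  ∀ x, ((p x : ℕ) ≤ m ↔ (x : ℕ) ≤ m)

lemma Pres.mul {m : Fin n} {p q : Equiv.Perm (Fin (n + 1))} (hp : Pres m p) (hq : Pres m q) :
    Pres m (p * q) := fun x => (hp (q x)).trans (hq x)

lemma Pres.inv {m : Fin n} {p : Equiv.Perm (Fin (n + 1))} (hp : Pres m p) : Pres m p⁻¹ := by
  intro x
  have := hp (p⁻¹ x)
  simpa using this.symm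

lemma Pres.one (m : Fin n) : Pres m 1 := fun _ => Iff.rfl

lemma sTrans_apply (j : Fin n) (x : Fin (n + 1)) :
    ((sTrans j x : Fin (n + 1)) : ℕ) =
      if (x : ℕ) = j then (j : ℕ) + 1 else if (x : ℕ) = j + 1 then (j : ℕ) else x := by
  unfold sTrans
  rw [Equiv.swap_apply_def]
  simp only [Fin.ext_iff, Fin.val_castSucc, Fin.val_succ]
  split_ifs <;> simp

lemma pres_sTrans {m j : Fin n} (h : j ≠ m) : Pres m (sTrans j) := by
  intro x
  rw [sTrans_apply]
  have : (j : ℕ) ≠ m := fun h' => h (Fin.ext h')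
  split_ifs <;> omega

lemma pres_word {m : Fin n} (l : List (Fin n)) (h : m ∉ l) : Pres m (l.map sTrans).prod := by
  induction l with
  | nil => exact Pres.one m
  | cons i l ih =>
    simp only [List.mem_cons, not_or] at h
    simp only [List.map_cons, List.prod_cons]
    exact (pres_sTrans (Ne.symm h.1)).mul (ih h.2)

lemma sTrans_inv (j : Fin n) : (sTrans j)⁻¹ = sTrans j := Equiv.swap_inv _ _

lemma exchange (a b : Fin (n + 1)) (l : List (Fin n)) : ∀ p : Equiv.Perm (Fin (n + 1)),
    p⁻¹ b < p⁻¹ a → (p * (l.map sTrans).prod)⁻¹ a < (p * (l.map sTrans).prod)⁻¹ b →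
    ∃ l1 j l2, l = l1 ++ j :: l2 ∧
      p * (l1.map sTrans).prod * sTrans j = Equiv.swap a b * (p * (l1.map sTrans).prod) := by
  induction l with
  | nil =>
    intro p h1 h2
    simp only [List.map_nil, List.prod_nil, mul_one] at h2
    exact absurd h1 (not_lt.2 h2.le)
  | cons j l ih =>
    intro p h1 h2
    by_cases h : (p * sTrans j)⁻¹ b < (p * sTrans j)⁻¹ a
    · obtain ⟨l1, i, l2, e, h3⟩ := ih (p * sTrans j) h (by simpa [mul_assoc] using h2)
      refine ⟨j :: l1, i, l2, by simp [e], ?_⟩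
      simpa [mul_assoc] using h3
    · refine ⟨[], j, l, rfl, ?_⟩
      simp only [List.map_nil, List.prod_nil, mul_one]
      have h4 : ¬ (sTrans j (p⁻¹ b) < sTrans j (p⁻¹ a)) := by
        simpa [mul_inv_rev, sTrans_inv] using h
      rw [Fin.lt_def, sTrans_apply, sTrans_apply] at h4
      rw [Fin.lt_def] at h1
      have hb : ((p⁻¹ b : Fin (n + 1)) : ℕ) = j := by split_ifs at h4 <;> omega
      have ha : ((p⁻¹ a : Fin (n + 1)) : ℕ) = j + 1 := by split_ifs at h4 <;> omega
      have hb' : p⁻¹ b = j.castSucc := Fin.ext hb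
      have ha' : p⁻¹ a = j.succ := Fin.ext (by simpa using ha)
      have hb2 : b = p j.castSucc := by rw [← hb']; simp
      have ha2 : a = p j.succ := by rw [← ha']; simp
      rw [ha2, hb2, Equiv.swap_comm, sTrans, Equiv.mul_swap_eq_swap_mul]

lemma reduced_support {m : Fin n} {r : Equiv.Perm (Fin (n + 1))} {l : List (Fin n)}
    (hl : IsReducedWord r l) (hr : Pres m r) : m ∉ l := by
  intro hm
  obtain ⟨l0, l', e, hm0⟩ := List.eq_append_cons_of_mem hm
  obtain ⟨h1, h2⟩ := hl
  set p0 := (l0.map sTrans).prod with hp0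
  have hP0 : Pres m p0 := pres_word l0 hm0
  have hrp : r = p0 * sTrans m * (l'.map sTrans).prod := by
    rw [← h1, e]; simp [hp0, mul_assoc]
  have ha : ((p0 m.castSucc : Fin (n + 1)) : ℕ) ≤ m := (hP0 _).2 (by simp)
  have hb : ¬ ((p0 m.succ : Fin (n + 1)) : ℕ) ≤ m := fun h => by
    have := (hP0 _).1 h
    simp at this
  obtain ⟨l1, j, l2, e', h3⟩ := exchange (p0 m.castSucc) (p0 m.succ) l' (p0 * sTrans m)
    (by simp [mul_inv_rev, sTrans_inv, sTrans])
    (by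
      rw [← hrp]
      have x1 := (hr.inv _).2 ha
      have x2 := mt (hr.inv _).1 hb
      rw [Fin.lt_def]; omega)
  have h4 : Equiv.swap (p0 m.castSucc) (p0 m.succ) * p0 = p0 * sTrans m := by
    rw [sTrans, Equiv.mul_swap_eq_swap_mul]
  have h5 : p0 * sTrans m * (l1.map sTrans).prod * sTrans j = p0 * (l1.map sTrans).prod := by
    rw [h3, ← h4]
    simp [← mul_assoc]
  have := h2 (l0 ++ l1 ++ l2) (by
    rw [hrp, e']
    simp only [List.map_append, List.prod_append, List.map_cons, List.prod_cons]
    rw [← hp0, ← h5]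
    simp only [mul_assoc])
  rw [e, e'] at this
  simp only [List.length_append, List.length_cons] at this
  omega

lemma pres_closure {m : Fin n} {B : Finset (Fin n)} (hm : m ∉ B) {r : Equiv.Perm (Fin (n + 1))}
    (hr : r ∈ Subgroup.closure {p : Equiv.Perm (Fin (n + 1)) | ∃ m ∈ B, p = sTrans m}) :
    Pres m r := by
  induction hr using Subgroup.closure_induction with
  | mem x hx =>
    obtain ⟨i, hi, rfl⟩ := hx
    exact pres_sTrans (fun h => hm (h ▸ hi))
  | one => exact Pres.one m
  | mul x y _ _ hx hy => exact hx.mul hy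
  | inv x _ hx => exact hx.inv

lemma blocks_far {I B B' : Finset (Fin n)} (hB : IsBlock I B) (hB' : IsBlock I B') (hne : B ≠ B')
    {i j : Fin n} (hi : i ∈ B) (hj : j ∈ B') : 2 ≤ Nat.dist i j := by
  obtain ⟨a, b, hab, rfl, hs, ha, hb⟩ := hB
  obtain ⟨a', b', hab', rfl, hs', ha', hb'⟩ := hB'
  rw [Finset.mem_Icc, Fin.le_def, Fin.le_def] at hi hj
  rw [Fin.le_def] at hab hab'
  by_contra hd
  have hd' : (i : ℕ) ≤ j + 1 ∧ (j : ℕ) ≤ i + 1 := by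
    unfold Nat.dist at hd; omega
  apply hne
  have key : ∀ {a b a' b' : Fin n}, (a : ℕ) ≤ b → (a' : ℕ) ≤ b' →
      Finset.Icc a' b' ⊆ I → (∀ c : Fin n, (c : ℕ) + 1 = (a : ℕ) → c ∉ I) →
      (a : ℕ) ≤ b' + 1 → (a : ℕ) ≤ a' := by
    intro a b a' b' h1 h2 h3 h4 h5
    by_contra h
    have hn := a.2
    have hmem : (⟨(a : ℕ) - 1, by omega⟩ : Fin n) ∈ Finset.Icc a' b' := by
      rw [Finset.mem_Icc, Fin.le_def, Fin.le_def]
      simp only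
      omega
    exact h4 _ (by simp only; omega) (h3 hmem)
  have key2 : ∀ {a b a' b' : Fin n}, (a : ℕ) ≤ b → (a' : ℕ) ≤ b' →
      Finset.Icc a' b' ⊆ I → (∀ c : Fin n, (b : ℕ) + 1 = (c : ℕ) → c ∉ I) →
      (a' : ℕ) ≤ b + 1 → (b' : ℕ) ≤ b := by
    intro a b a' b' h1 h2 h3 h4 h5
    by_contra h
    have hn := b'.2
    have hmem : (⟨(b : ℕ) + 1, by omega⟩ : Fin n) ∈ Finset.Icc a' b' := by
      rw [Finset.mem_Icc, Fin.le_def, Fin.le_def]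
      simp only
      omega
    exact h4 _ rfl (h3 hmem)
  have e1 := key hab hab' hs' ha (by omega)
  have e2 := key hab' hab hs ha' (by omega)
  have e3 := key2 hab hab' hs' hb (by omega)
  have e4 := key2 hab' hab hs hb' (by omega)
  have ea : a = a' := Fin.ext (by omega)
  have eb : b = b' := Fin.ext (by omega)
  rw [ea, eb]

lemma exists_block {I : Finset (Fin n)} {i : Fin n} (hi : i ∈ I) :
    ∃ B, IsBlock I B ∧ i ∈ B := by
  obtain ⟨a, ha, hamin⟩ := Finset.exists_min_image
    (Finset.univ.filter fun a : Fin n => a ≤ i ∧ Finset.Icc a i ⊆ I) id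
    ⟨i, by simp [hi]⟩
  obtain ⟨b, hb, hbmax⟩ := Finset.exists_max_image
    (Finset.univ.filter fun b : Fin n => i ≤ b ∧ Finset.Icc i b ⊆ I) id
    ⟨i, by simp [hi]⟩
  simp only [Finset.mem_filter, Finset.mem_univ, true_and, id] at ha hb hamin hbmax
  refine ⟨Finset.Icc a b, ⟨a, b, ha.1.trans hb.1, rfl, ?_, ?_, ?_⟩,
    Finset.mem_Icc.2 ⟨ha.1, hb.1⟩⟩
  · intro x hx
    rw [Finset.mem_Icc] at hx
    rcases le_total x i with h | h
    · exact ha.2 (Finset.mem_Icc.2 ⟨hx.1, h⟩)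
    · exact hb.2 (Finset.mem_Icc.2 ⟨h, hx.2⟩)
  · intro c hc hcI
    have hai := ha.1
    rw [Fin.le_def] at hai
    have := hamin c ⟨by rw [Fin.le_def]; omega, by
      intro x hx
      rw [Finset.mem_Icc, Fin.le_def, Fin.le_def] at hx
      by_cases h : (x : ℕ) = c
      · rw [Fin.ext h]; exact hcI
      · exact ha.2 (by rw [Finset.mem_Icc, Fin.le_def, Fin.le_def]; omega)⟩
    rw [Fin.le_def] at this
    omega
  · intro c hc hcI
    have hai := hb.1
    rw [Fin.le_def] at hai
    have := hbmax c ⟨by rw [Fin.le_def]; omega, by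
      intro x hx
      rw [Finset.mem_Icc, Fin.le_def, Fin.le_def] at hx
      by_cases h : (x : ℕ) = c
      · rw [Fin.ext h]; exact hcI
      · exact hb.2 (by rw [Finset.mem_Icc, Fin.le_def, Fin.le_def]; omega)⟩
    rw [Fin.le_def] at this
    omega

lemma multi_mem {k : ℕ} (B : Fin k → Finset (Fin n)) (lr : Fin k → List (Fin n))
    (hmem : ∀ j, (1 + ((lr j).map (bg n)).prod) * EE (B j) ∈ BTC n)
    (hfar : ∀ j j', j ≠ j' → ∀ x ∈ lr j', ∀ y ∈ B j, 2 ≤ Nat.dist y x)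
    (js : List (Fin k)) (hjs : js.Nodup) :
    (js.map (fun j => 1 + ((lr j).map (bg n)).prod)).prod * EE (js.toFinset.biUnion B)
      ∈ BTC n := by
  induction js with
  | nil => simpa [EE_empty] using (BTC n).one_mem
  | cons j js ih =>
    rw [List.nodup_cons] at hjs
    have hc : Commute (js.map (fun j => 1 + ((lr j).map (bg n)).prod)).prod (EE (B j)) := by
      apply Commute.list_prod_left
      intro x hx
      obtain ⟨j', hj', rfl⟩ := List.mem_map.1 hx
      apply (Commute.one_left _).add_left
      apply Commute.list_prod_left
      intro y hy
      obtain ⟨t, ht, rfl⟩ := List.mem_map.1 hy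
      exact comm_far t _ (hfar j j' (fun h => hjs.1 (h ▸ hj')) t ht)
    have := (BTC n).mul_mem (hmem j) (ih hjs.2)
    rw [List.toFinset_cons, Finset.biUnion_insert, EE_mul, List.map_cons, List.prod_cons]
    convert this using 1
    rw [mul_assoc, mul_assoc, ← mul_assoc _ (EE (B j)), hc.eq]
    simp only [mul_assoc]

end Helpers

/-- Let `I ⊆ {1,…,n}` have contiguous blocks `B_1, …, B_k`. For any
`w ∈ S_{n+1}` and transpositions `r_j ∈ W_{B_j}`, the element
`g_w · (1 + g_{r_1}) ⋯ (1 + g_{r_k}) · ∏_{i∈I} e_i` lies in `𝒞_n(v)`.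
(Each `g_u` is expressed via an arbitrary reduced word for `u`.) -/
theorem spanning_element_mem_braid_image (n : ℕ) (hn : 1 ≤ n) (I : Finset (Fin n))
    (k : ℕ) (B : Fin k → Finset (Fin n))
    (hBmem : ∀ j, B j ∈ blocksOf I) (hBinj : Function.Injective B)
    (hBsurj : ∀ b ∈ blocksOf I, ∃ j, B j = b)
    (w : Equiv.Perm (Fin (n + 1))) (lw : List (Fin n)) (hlw : IsReducedWord w lw)
    (r : Fin k → Equiv.Perm (Fin (n + 1)))
    (hr : ∀ j, (r j).IsSwap ∧
      r j ∈ Subgroup.closure {p : Equiv.Perm (Fin (n + 1)) | ∃ m ∈ B j, p = sTrans m})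
    (lr : Fin k → List (Fin n)) (hlr : ∀ j, IsReducedWord (r j) (lr j)) :
    (lw.map (bg n)).prod *
        ((List.finRange k).map (fun j => 1 + ((lr j).map (bg n)).prod)).prod *
        ((I.sort (· ≤ ·)).map (be n)).prod ∈ BTC n := by
  have hblk : ∀ j, IsBlock I (B j) := fun j => (Finset.mem_filter.1 (hBmem j)).2
  have hsup : ∀ j, ∀ x ∈ lr j, x ∈ B j := by
    intro j x hx
    by_contra hc
    exact reduced_support (hlr j) (pres_closure hc (hr j).2) hx
  have hmem : ∀ j, (1 + ((lr j).map (bg n)).prod) * EE (B j) ∈ BTC n := by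
    intro j
    obtain ⟨a, b, _, e, _⟩ := hblk j
    have h1 := hsup j
    rw [e] at h1 ⊢
    exact word_odd_mem _ h1 (odd_of_swap (hlr j).1 (hr j).1)
  have hI : (List.finRange k).toFinset.biUnion B = I := by
    ext i
    simp only [Finset.mem_biUnion, List.mem_toFinset, List.mem_finRange, true_and]
    constructor
    · rintro ⟨j, hj⟩
      exact Finset.mem_powerset.1 (Finset.mem_filter.1 (hBmem j)).1 hj
    · intro hi
      obtain ⟨C, hC, hiC⟩ := exists_block hi
      obtain ⟨a, b, _, _, hCI, _⟩ := id hC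
      obtain ⟨j, rfl⟩ := hBsurj C (Finset.mem_filter.2 ⟨Finset.mem_powerset.2 hCI, hC⟩)
      exact ⟨j, hiC⟩
  have := multi_mem B lr hmem
    (fun j j' hjj x hx y hy =>
      blocks_far (hblk j) (hblk j') (fun h => hjj (hBinj h)) hy (hsup j' x hx))
    (List.finRange k) (List.nodup_finRange k)
  rw [hI] at this
  rw [EE_sort, mul_assoc]
  refine (BTC n).mul_mem ?_ this
  apply Subalgebra.list_prod_mem
  intro x hx
  obtain ⟨j, _, rfl⟩ := List.mem_map.1 hx
  exact bg_mem j
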